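/- Under Assumptions on closed convexity of X, network connectivity, and doubly stochastic weights, and assuming the subgradients of each f_i are uniformly bounded over X by scalars C_i (‖∇f_i(x)‖ ≤ C_i for all x ∈ X, i ∈ V), the iterates satisfy, for all j ∈ V and k ≥ 0: ‖y_{k+1} − w_{j,k+1}‖ ≤ m θ β^{k+1} max_{i∈V} ‖w_{i,0}‖ + θ Σ_{ℓ=1}^{k} α_ℓ β^{k+1−ℓ} Σ_{i=1}^{m} (C_i + ‖ε_{i,ℓ}‖) + (α_{k+1}/m) Σ_{i=1}^{m} (C_i + ‖ε_{i,k+1}‖) + α_{k+1} (C_j + ‖ε_{j,k+1}‖), where θ = (1 − η/(4m²))^{−2} and β = (1 − η/(4m²))^{1/Q}. -/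

import Mathlib

open Filter Finset

/-!
The error `p i (k + 1) = w i (k + 1) - v i k` made by the projected step at agent `i` is at most
`α (k + 1) * (C i + ‖ε i (k + 1)‖)`, because the projection does not increase distances to points
of `X`. The iterates therefore follow a perturbed linear averaging dynamics, and it remains to show
that the transition matrices `A (s + t) ⋯ A (s + 1)` approach the uniform matrix `1 / m` at the
geometric rate `θ β ^ t`.

For this, follow the energy `∑ i, x i ^ 2` of a mean-zero vector. One averaging step lowers it by
`∑ r, ∑ j, A r j * (x j - (A x) r) ^ 2`. Sort the initial values. The two sides of each gap between
consecutive values stay separated until some agent `r` listens to both sides at once, which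
connectivity forces to happen within `Q` steps; at that moment `r` pays at least `η / 2` times the
sum of the squares of the gaps it straddles. The squared gaps add up to at least
`∑ i, x i ^ 2 / m ^ 2`, so every `Q` steps the energy shrinks by the factor
`1 - η / (2 m ^ 2) ≤ (1 - η / (4 m ^ 2)) ^ 2`.
-/

section Sorting

theorem exists_monotone_enumeration {V α : Type*} [Fintype V] [LinearOrder α] {n : ℕ}
    (hn : Fintype.card V = n + 1) (x : V → α) :
    ∃ y : ℕ → α, Monotone y ∧ y '' Set.Iic n = Set.range x := by
  let e : Fin (n + 1) ≃ V := (Fintype.equivFinOfCardEq hn).symm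
  let σ : Fin (n + 1) ≃ V := (Tuple.sort (x ∘ e)).trans e
  have hσ : Monotone (x ∘ σ) := Tuple.monotone_sort (x ∘ e)
  refine ⟨fun d => x (σ (Fin.clamp d n)), fun d d' hd => hσ ?_, Set.Subset.antisymm ?_ ?_⟩
  · exact Fin.mk_le_mk.2 (min_le_min_right n hd)
  · rintro _ ⟨d, -, rfl⟩
    exact ⟨_, rfl⟩
  · rintro _ ⟨i, rfl⟩
    have hd : (σ.symm i : ℕ) ≤ n := Fin.is_le _
    have hclamp : Fin.clamp (σ.symm i) n = σ.symm i := Fin.ext (min_eq_left hd)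
    exact ⟨σ.symm i, hd, by simp only [hclamp, Equiv.apply_symm_apply]⟩

theorem sum_sq_gap_le_sq_range {y : ℕ → ℝ} (hy : Monotone y) (D : Finset ℕ) (hD : D.Nonempty) :
    ∑ d ∈ D, (y (d + 1) - y d) ^ 2 ≤ (y (D.max' hD + 1) - y (D.min' hD)) ^ 2 := by
  have hgap : ∀ d, 0 ≤ y (d + 1) - y d := fun d => sub_nonneg.2 (hy d.le_succ)
  have hsub : D ⊆ Ico (D.min' hD) (D.max' hD + 1) := fun d hd =>
    mem_Ico.2 ⟨D.min'_le d hd, Nat.lt_succ_of_le (D.le_max' d hd)⟩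
  have hsum : ∑ d ∈ D, (y (d + 1) - y d) ≤ y (D.max' hD + 1) - y (D.min' hD) := by
    rw [← sum_Ico_sub y ((D.min'_le_max' hD).trans (Nat.le_succ _))]
    exact sum_le_sum_of_subset_of_nonneg hsub fun d _ _ => hgap d
  calc ∑ d ∈ D, (y (d + 1) - y d) ^ 2 ≤ (∑ d ∈ D, (y (d + 1) - y d)) ^ 2 :=
        sum_sq_le_sq_sum_of_nonneg fun d _ => hgap d
    _ ≤ _ := pow_le_pow_left₀ (sum_nonneg fun d _ => hgap d) hsum 2

theorem sq_range_le_mul_sum_sq_gap (y : ℕ → ℝ) (n : ℕ) :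
    (y n - y 0) ^ 2 ≤ n * ∑ d ∈ range n, (y (d + 1) - y d) ^ 2 := by
  rw [← sum_range_sub y]
  simpa only [card_range] using
    sq_sum_le_card_mul_sum_sq (s := range n) (f := fun d => y (d + 1) - y d)

variable {V : Type*} [Fintype V]

theorem sum_sq_le_card_mul_sq_range {x : V → ℝ} (hx : ∑ i, x i = 0) {a b : ℝ}
    (hab : ∀ i, x i ∈ Set.Icc a b) : ∑ i, x i ^ 2 ≤ Fintype.card V * (b - a) ^ 2 := by
  rcases isEmpty_or_nonempty V with hV | hV
  · simp
  obtain ⟨i, -, hi⟩ : ∃ i ∈ univ, x i ≤ 0 := exists_le_of_sum_le univ_nonempty (by simp [hx])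
  obtain ⟨j, -, hj⟩ : ∃ j ∈ univ, 0 ≤ x j := exists_le_of_sum_le univ_nonempty (by simp [hx])
  have ha : a ≤ 0 := (hab i).1.trans hi
  have hb : 0 ≤ b := hj.trans (hab j).2
  rw [← nsmul_eq_mul, ← card_univ]
  refine sum_le_card_nsmul _ _ _ fun l _ => sq_le_sq' ?_ ?_
  · linarith [(hab l).1]
  · linarith [(hab l).2]

theorem sum_sq_le_card_sq_mul_sum_sq_gap {x : V → ℝ} (hx : ∑ i, x i = 0) {n : ℕ}
    (hn : n ≤ Fintype.card V) {y : ℕ → ℝ} (hy : Monotone y)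
    (hxy : y '' Set.Iic n = Set.range x) :
    ∑ i, x i ^ 2 ≤ (Fintype.card V : ℝ) ^ 2 * ∑ d ∈ range n, (y (d + 1) - y d) ^ 2 := by
  have hmem : ∀ i, x i ∈ Set.Icc (y 0) (y n) := fun i => by
    obtain ⟨d, hd, hdi⟩ : x i ∈ y '' Set.Iic n := hxy ▸ Set.mem_range_self i
    exact hdi ▸ ⟨hy d.zero_le, hy hd⟩
  calc ∑ i, x i ^ 2 ≤ Fintype.card V * (y n - y 0) ^ 2 := sum_sq_le_card_mul_sq_range hx hmem
    _ ≤ Fintype.card V * (n * ∑ d ∈ range n, (y (d + 1) - y d) ^ 2) := by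
        gcongr
        exact sq_range_le_mul_sum_sq_gap y n
    _ ≤ Fintype.card V * (Fintype.card V * ∑ d ∈ range n, (y (d + 1) - y d) ^ 2) := by
        gcongr
    _ = _ := by ring

end Sorting

section Averaging

open scoped Matrix

variable {V : Type*} [Fintype V]

theorem half_mul_sq_sub_le_sum_mul_sq_sub {b : V → ℝ} (hb : ∀ j, 0 ≤ b j) {η : ℝ} (hη : 0 ≤ η)
    (z : V → ℝ) (c : ℝ) {p q : V} (hp : η ≤ b p) (hq : η ≤ b q) :
    η / 2 * (z q - z p) ^ 2 ≤ ∑ j, b j * (z j - c) ^ 2 := by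
  classical
  have hnonneg : ∀ j, 0 ≤ b j * (z j - c) ^ 2 := fun j => mul_nonneg (hb j) (sq_nonneg _)
  rcases eq_or_ne p q with rfl | hpq
  · simpa using sum_nonneg fun j _ => hnonneg j
  calc η / 2 * (z q - z p) ^ 2 ≤ η * (z p - c) ^ 2 + η * (z q - c) ^ 2 := by
        linarith [mul_nonneg hη (sq_nonneg (z p - c + (z q - c)))]
    _ ≤ b p * (z p - c) ^ 2 + b q * (z q - c) ^ 2 := by gcongr
    _ = ∑ j ∈ {p, q}, b j * (z j - c) ^ 2 := (sum_pair (f := fun j => b j * (z j - c) ^ 2) hpq).symm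
    _ ≤ ∑ j, b j * (z j - c) ^ 2 :=
        sum_le_sum_of_subset_of_nonneg (subset_univ _) fun j _ _ => hnonneg j

theorem half_mul_sum_sq_gap_le_sum_mul_sq_sub {b : V → ℝ} (hb : ∀ j, 0 ≤ b j) {η : ℝ}
    (hη : 0 ≤ η) {y : ℕ → ℝ} (hy : Monotone y) {z : V → ℝ} {D : Finset ℕ}
    (hD : ∀ d ∈ D, ∃ p q, (η ≤ b p ∧ z p ≤ y d) ∧ η ≤ b q ∧ y (d + 1) ≤ z q) (c : ℝ) :
    η / 2 * ∑ d ∈ D, (y (d + 1) - y d) ^ 2 ≤ ∑ j, b j * (z j - c) ^ 2 := by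
  rcases D.eq_empty_or_nonempty with rfl | hne
  · simpa using sum_nonneg fun j _ => mul_nonneg (hb j) (sq_nonneg (z j - c))
  obtain ⟨p, -, ⟨hp, hzp⟩, -⟩ := hD _ (D.min'_mem hne)
  obtain ⟨-, q, -, hq, hzq⟩ := hD _ (D.max'_mem hne)
  have hy_le : y (D.min' hne) ≤ y (D.max' hne + 1) :=
    hy ((D.min'_le_max' hne).trans (Nat.le_succ _))
  have hrange : (y (D.max' hne + 1) - y (D.min' hne)) ^ 2 ≤ (z q - z p) ^ 2 :=
    pow_le_pow_left₀ (sub_nonneg.2 hy_le) (sub_le_sub hzq hzp) 2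
  calc η / 2 * ∑ d ∈ D, (y (d + 1) - y d) ^ 2 ≤ η / 2 * (z q - z p) ^ 2 := by
        gcongr
        exact (sum_sq_gap_le_sq_range hy D hne).trans hrange
    _ ≤ _ := half_mul_sq_sub_le_sum_mul_sq_sub hb hη z c hp hq

variable [DecidableEq V]

theorem mulVec_mem_of_forall_ne_zero {A : Matrix V V ℝ} (hA : A ∈ Matrix.rowStochastic ℝ V)
    {S : Set ℝ} (hS : Convex ℝ S) {x : V → ℝ} {i : V} (hx : ∀ j, A i j ≠ 0 → x j ∈ S) :
    (A *ᵥ x) i ∈ S := by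
  have hsum : ∑ᶠ j, A i j = 1 := by
    rw [finsum_eq_sum_of_fintype, Matrix.sum_row_of_mem_rowStochastic hA]
  have hmem := hS.finsum_mem (fun j => hA.1 i j) hsum hx
  rwa [finsum_eq_sum_of_fintype] at hmem

theorem sum_mul_sq_sub_mulVec {A : Matrix V V ℝ} (hA : A ∈ doublyStochastic ℝ V) (x : V → ℝ) :
    ∑ r, ∑ j, A r j * (x j - (A *ᵥ x) r) ^ 2 = ∑ i, x i ^ 2 - ∑ i, (A *ᵥ x) i ^ 2 := by
  have hrow : ∀ r, ∑ j, A r j * (x j - (A *ᵥ x) r) ^ 2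
      = ∑ j, A r j * x j ^ 2 - (A *ᵥ x) r ^ 2 := fun r => by
    calc ∑ j, A r j * (x j - (A *ᵥ x) r) ^ 2
        = ∑ j, (A r j * x j ^ 2 - 2 * (A *ᵥ x) r * (A r j * x j) + (A *ᵥ x) r ^ 2 * A r j) :=
          sum_congr rfl fun j _ => by ring
      _ = ∑ j, A r j * x j ^ 2 - 2 * (A *ᵥ x) r * (A *ᵥ x) r + (A *ᵥ x) r ^ 2 * 1 := by
          rw [sum_add_distrib, sum_sub_distrib, ← mul_sum, ← mul_sum,
            sum_row_of_mem_doublyStochastic hA]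
          rfl
      _ = _ := by ring
  have hcol : ∑ r, ∑ j, A r j * x j ^ 2 = ∑ j, x j ^ 2 := by
    rw [sum_comm]
    simp only [← sum_mul, sum_col_of_mem_doublyStochastic hA, one_mul]
  simp only [hrow, sum_sub_distrib, hcol]

theorem sum_sq_mulVec_le {A : Matrix V V ℝ} (hA : A ∈ doublyStochastic ℝ V) (x : V → ℝ) :
    ∑ i, (A *ᵥ x) i ^ 2 ≤ ∑ i, x i ^ 2 := by
  rw [← sub_nonneg, ← sum_mul_sq_sub_mulVec hA]
  exact sum_nonneg fun r _ => sum_nonneg fun j _ => mul_nonneg (hA.1 r j) (sq_nonneg _)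

theorem mulVec_single_sub_const {A : Matrix V V ℝ} (hA : A ∈ Matrix.rowStochastic ℝ V) (c : ℝ)
    (j i : V) : (A *ᵥ (Pi.single i 1 - fun _ => c)) j = A j i - c := by
  have hconst : (A *ᵥ fun _ => c) j = c := by
    simp only [Matrix.mulVec, dotProduct, ← sum_mul, Matrix.sum_row_of_mem_rowStochastic hA,
      one_mul]
  rw [Matrix.mulVec_sub, Pi.sub_apply, hconst, Matrix.mulVec_single_one, Matrix.col_apply]

theorem sum_single_sub_inv_card (i : V) :
    ∑ l, ((Pi.single i 1 : V → ℝ) l - (Fintype.card V : ℝ)⁻¹) = 0 := by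
  have : Nonempty V := ⟨i⟩
  simp

theorem sum_sq_single_sub_const (i : V) (c : ℝ) :
    ∑ l, ((Pi.single i 1 : V → ℝ) l - c) ^ 2 = 1 - 2 * c + Fintype.card V * c ^ 2 := by
  have hterm : ∀ l, ((Pi.single i 1 : V → ℝ) l - c) ^ 2 =
      (Pi.single i (1 - 2 * c) : V → ℝ) l + c ^ 2 := fun l => by
    rcases eq_or_ne l i with rfl | hl
    · simp only [Pi.single_eq_same]
      ring
    · simp only [Pi.single_eq_of_ne hl]
      ring
  simp only [hterm, sum_add_distrib, sum_pi_single', mem_univ, if_true, sum_const, card_univ,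
    nsmul_eq_mul]

theorem sum_sq_single_sub_inv_card_le_one (i : V) :
    ∑ l, ((Pi.single i 1 : V → ℝ) l - (Fintype.card V : ℝ)⁻¹) ^ 2 ≤ 1 := by
  have : Nonempty V := ⟨i⟩
  have hcard : (Fintype.card V : ℝ) * (Fintype.card V : ℝ)⁻¹ = 1 :=
    mul_inv_cancel₀ (by exact_mod_cast Fintype.card_ne_zero)
  have hinv : (0 : ℝ) ≤ (Fintype.card V : ℝ)⁻¹ := by positivity
  rw [sum_sq_single_sub_const, sq, ← mul_assoc, hcard]
  linarith

/-- The matrix `A (s + t) * ⋯ * A (s + 1)` carrying the state at time `s` to the state at time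
`s + t`; the second argument is the elapsed time rather than the final time. -/
def transition (A : ℕ → Matrix V V ℝ) (s : ℕ) : ℕ → Matrix V V ℝ
  | 0 => 1
  | t + 1 => A (s + t + 1) * transition A s t

theorem transition_add (A : ℕ → Matrix V V ℝ) (s t u : ℕ) :
    transition A s (t + u) = transition A (s + t) u * transition A s t := by
  induction u with
  | zero => exact (one_mul _).symm
  | succ u ih => rw [← add_assoc, transition, transition, ih, mul_assoc, add_assoc s t u]

theorem transition_mem_doublyStochastic {A : ℕ → Matrix V V ℝ}
    (hA : ∀ k, A k ∈ doublyStochastic ℝ V) (s t : ℕ) :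
    transition A s t ∈ doublyStochastic ℝ V := by
  induction t with
  | zero => exact one_mem _
  | succ t ih => exact mul_mem (hA _) ih

theorem transition_zero_mulVec (A : ℕ → Matrix V V ℝ) (s : ℕ) (x : V → ℝ) :
    transition A s 0 *ᵥ x = x :=
  Matrix.one_mulVec x

theorem transition_succ_mulVec (A : ℕ → Matrix V V ℝ) (s t : ℕ) (x : V → ℝ) :
    transition A s (t + 1) *ᵥ x = A (s + t + 1) *ᵥ (transition A s t *ᵥ x) := by
  rw [transition, Matrix.mulVec_mulVec]

theorem sum_dissipation_eq {A : ℕ → Matrix V V ℝ} (hA : ∀ k, A k ∈ doublyStochastic ℝ V) (s : ℕ)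
    (x : V → ℝ) (Q : ℕ) :
    ∑ t ∈ range Q, ∑ r, ∑ j, A (s + t + 1) r j *
        ((transition A s t *ᵥ x) j - (transition A s (t + 1) *ᵥ x) r) ^ 2 =
      ∑ i, x i ^ 2 - ∑ i, (transition A s Q *ᵥ x) i ^ 2 := by
  have hstep : ∀ t, ∑ r, ∑ j, A (s + t + 1) r j *
        ((transition A s t *ᵥ x) j - (transition A s (t + 1) *ᵥ x) r) ^ 2 =
      ∑ i, (transition A s t *ᵥ x) i ^ 2 - ∑ i, (transition A s (t + 1) *ᵥ x) i ^ 2 := fun t => by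
    simp only [transition_succ_mulVec, sum_mul_sq_sub_mulVec (hA _)]
  simp only [hstep, sum_range_sub' fun t => ∑ i, (transition A s t *ᵥ x) i ^ 2,
    transition_zero_mulVec]

end Averaging

section Rate

variable {η : ℝ}

/-- The factor `1 - η / (4 m ^ 2)` by which the norm of a mean-zero vector over `m` agents shrinks
in each connectivity window. -/
noncomputable def windowFactor (η : ℝ) (m : ℕ) : ℝ :=
  1 - η / (4 * (m : ℝ) ^ 2)

/-- The constant `θ` of the geometric bound on the disagreement of `m` agents. -/
noncomputable def mixingConst (η : ℝ) (m : ℕ) : ℝ :=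
  (windowFactor η m ^ 2)⁻¹

/-- The rate `β` of the geometric bound on the disagreement of `m` agents. -/
noncomputable def mixingRate (η : ℝ) (m Q : ℕ) : ℝ :=
  windowFactor η m ^ ((1 : ℝ) / (Q : ℝ))

theorem windowFactor_pos (hη : η ≤ 1) (m : ℕ) : 0 < windowFactor η m := by
  have : η / (4 * (m : ℝ) ^ 2) ≤ 1 / 4 := by
    rcases m.eq_zero_or_pos with rfl | hm
    · norm_num
    have hm_sq : (1 : ℝ) ≤ (m : ℝ) ^ 2 := one_le_pow₀ (by exact_mod_cast hm)
    rw [div_le_div_iff₀ (by positivity) (by norm_num)]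
    linarith
  unfold windowFactor
  linarith

theorem windowFactor_le_one (hη : 0 ≤ η) (m : ℕ) : windowFactor η m ≤ 1 :=
  sub_le_self 1 (by positivity)

theorem mixingConst_nonneg (η : ℝ) (m : ℕ) : 0 ≤ mixingConst η m :=
  inv_nonneg.2 (sq_nonneg _)

theorem mixingRate_nonneg (hη : η ≤ 1) (m Q : ℕ) : 0 ≤ mixingRate η m Q :=
  Real.rpow_nonneg (windowFactor_pos hη m).le _

theorem pow_div_le_inv_mul_rpow_pow {c : ℝ} (hc0 : 0 < c) (hc1 : c ≤ 1) {Q : ℕ} (hQ : 0 < Q)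
    (N : ℕ) : c ^ (N / Q) ≤ c⁻¹ * (c ^ ((1 : ℝ) / (Q : ℝ))) ^ N := by
  set β := c ^ ((1 : ℝ) / (Q : ℝ)) with hβ
  have hβ0 : 0 ≤ β := Real.rpow_nonneg hc0.le _
  have hβ1 : β ≤ 1 := Real.rpow_le_one hc0.le hc1 (by positivity)
  have hβQ : β ^ Q = c := by
    rw [hβ, one_div, Real.rpow_inv_natCast_pow hc0.le hQ.ne']
  have hpow : c ^ (N / Q + 1) ≤ β ^ N := by
    rw [← hβQ, ← pow_mul]
    exact pow_le_pow_of_le_one hβ0 hβ1 (Nat.lt_mul_div_succ N hQ).le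
  rwa [inv_mul_eq_div, le_div_iff₀ hc0, ← pow_succ]

theorem windowFactor_pow_div_le (hη0 : 0 ≤ η) (hη1 : η ≤ 1) (m : ℕ) {Q : ℕ} (hQ : 0 < Q)
    (N : ℕ) : windowFactor η m ^ (N / Q) ≤ mixingConst η m * mixingRate η m Q ^ N := by
  have hpos := windowFactor_pos hη1 m
  have hle := windowFactor_le_one hη0 m
  have hconst : (windowFactor η m)⁻¹ ≤ mixingConst η m :=
    inv_anti₀ (pow_pos hpos 2) (pow_le_of_le_one hpos.le hle two_ne_zero)
  calc windowFactor η m ^ (N / Q) ≤ (windowFactor η m)⁻¹ * mixingRate η m Q ^ N :=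
        pow_div_le_inv_mul_rpow_pow hpos hle hQ N
    _ ≤ _ := mul_le_mul_of_nonneg_right hconst (pow_nonneg (mixingRate_nonneg hη1 m Q) N)

end Rate

section Mixing

open scoped Matrix

variable {V : Type*} [Fintype V] [DecidableEq V] {η : ℝ} {A : ℕ → Matrix V V ℝ} {Q : ℕ}

/-- The weights of one round of averaging: doubly stochastic, with every positive entry and every
diagonal entry at least `η`. -/
structure IsWeightMatrix (η : ℝ) (A : Matrix V V ℝ) : Prop where
  mem_doublyStochastic : A ∈ doublyStochastic ℝ V
  le_of_pos : ∀ i j, 0 < A i j → η ≤ A i j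
  le_diag : ∀ i, η ≤ A i i

theorem IsWeightMatrix.le_of_ne_zero {A : Matrix V V ℝ} (hA : IsWeightMatrix η A) {i j : V}
    (hij : A i j ≠ 0) : η ≤ A i j :=
  hA.le_of_pos i j ((nonneg_of_mem_doublyStochastic hA.mem_doublyStochastic).lt_of_ne' hij)

theorem IsWeightMatrix.le_one [Nonempty V] {A : Matrix V V ℝ} (hA : IsWeightMatrix η A) : η ≤ 1 :=
  (hA.le_diag (Classical.arbitrary V)).trans
    (le_one_of_mem_doublyStochastic hA.mem_doublyStochastic)

/-- Strong connectivity of the communication graph formed over the rounds `s + 1, …, s + Q`, where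
`A k i j` is positive when agent `i` hears from agent `j` in round `k`. -/
def WindowConnected (A : ℕ → Matrix V V ℝ) (Q s : ℕ) : Prop :=
  ∀ i j, Relation.ReflTransGen (fun u u' => ∃ l, 1 ≤ l ∧ l ≤ Q ∧ 0 < A (s + l) u' u) i j

/-- Agents `p` and `q` whose values lie on the two sides of the gap between `a` and `b` are both
heard, with weight at least `η`, by agent `r` in the round following time `s + t`. -/
def Straddles (η : ℝ) (A : ℕ → Matrix V V ℝ) (s : ℕ) (x : V → ℝ) (a b : ℝ) (t : ℕ) (r : V) :
    Prop :=
  ∃ p q, (η ≤ A (s + t + 1) r p ∧ (transition A s t *ᵥ x) p ≤ a) ∧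
    η ≤ A (s + t + 1) r q ∧ b ≤ (transition A s t *ᵥ x) q

theorem separated_of_forall_not_straddles (hA : ∀ k, IsWeightMatrix η (A k)) {s : ℕ} {x : V → ℝ}
    {a b : ℝ} (hgap : ∀ i, x i ≤ a ∨ b ≤ x i) {t : ℕ}
    (hno : ∀ t' < t, ∀ r, ¬ Straddles η A s x a b t' r) (i : V) :
    (x i ≤ a → (transition A s t *ᵥ x) i ≤ a) ∧ (b ≤ x i → b ≤ (transition A s t *ᵥ x) i) := by
  induction t generalizing i with
  | zero => simp only [transition_zero_mulVec, imp_self, and_self]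
  | succ t ih =>
    have ih := ih fun t' ht' => hno t' (ht'.trans t.lt_succ_self)
    have hno := hno t t.lt_succ_self i
    have hrow := doublyStochastic_eq_rowStochastic_inf_colStochastic.le
      (hA (s + t + 1)).mem_doublyStochastic |>.1
    rw [transition_succ_mulVec]
    refine ⟨fun hi => ?_, fun hi => ?_⟩
    · refine mulVec_mem_of_forall_ne_zero hrow (convex_Iic a) fun j hj => ?_
      refine (ih j).1 ((hgap j).resolve_right fun hbj => hno ?_)
      exact ⟨i, j, ⟨(hA _).le_diag i, (ih i).1 hi⟩, (hA _).le_of_ne_zero hj, (ih j).2 hbj⟩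
    · refine mulVec_mem_of_forall_ne_zero hrow (convex_Ici b) fun j hj => ?_
      refine (ih j).2 ((hgap j).resolve_left fun haj => hno ?_)
      exact ⟨j, i, ⟨(hA _).le_of_ne_zero hj, (ih j).1 haj⟩, (hA _).le_diag i, (ih i).2 hi⟩

theorem WindowConnected.exists_straddles (hA : ∀ k, IsWeightMatrix η (A k)) {s : ℕ}
    (hconn : WindowConnected A Q s) {x : V → ℝ} {a b : ℝ} (hab : a < b)
    (hgap : ∀ i, x i ≤ a ∨ b ≤ x i) (ha : ∃ i, x i ≤ a) (hb : ∃ i, b ≤ x i) :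
    ∃ t < Q, ∃ r, Straddles η A s x a b t r := by
  by_contra! hno
  obtain ⟨i, hi⟩ := ha
  obtain ⟨j, hj⟩ := hb
  suffices hle : x j ≤ a from (hab.trans_le hj).not_ge hle
  clear hj
  induction hconn i j with
  | refl => exact hi
  | @tail u u' _ hedge hu =>
    obtain ⟨l, hl1, hlQ, hpos⟩ := hedge
    obtain ⟨t, rfl⟩ := Nat.exists_eq_add_of_le' hl1
    refine (hgap u').resolve_right fun hu' => hno t hlQ u' ?_
    have hsep := separated_of_forall_not_straddles hA hgap fun t' ht' => hno t' (ht'.trans hlQ)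
    exact ⟨u, u', ⟨(hA _).le_of_pos _ _ hpos, (hsep u).1 hu⟩, (hA _).le_diag u', (hsep u').2 hu'⟩

theorem WindowConnected.half_mul_sum_sq_gap_le (hη : 0 ≤ η) (hA : ∀ k, IsWeightMatrix η (A k))
    {s : ℕ} (hconn : WindowConnected A Q s) {x : V → ℝ} {n : ℕ} {y : ℕ → ℝ} (hy : Monotone y)
    (hxy : y '' Set.Iic n = Set.range x) :
    η / 2 * ∑ d ∈ range n, (y (d + 1) - y d) ^ 2 ≤
      ∑ i, x i ^ 2 - ∑ i, (transition A s Q *ᵥ x) i ^ 2 := by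
  have hgap : ∀ d i, x i ≤ y d ∨ y (d + 1) ≤ x i := fun d i => by
    obtain ⟨e, -, he⟩ : x i ∈ y '' Set.Iic n := hxy ▸ Set.mem_range_self i
    exact he ▸ (le_or_gt e d).imp (fun h => hy h) fun h => hy h
  have hval : ∀ d ≤ n, ∃ i, x i = y d := fun d hd =>
    show y d ∈ Set.range x from hxy ▸ ⟨d, hd, rfl⟩
  let D := {d ∈ range n | y d < y (d + 1)}
  have hstraddle : ∀ d ∈ D, ∃ tr ∈ range Q ×ˢ (univ : Finset V),
      Straddles η A s x (y d) (y (d + 1)) tr.1 tr.2 := fun d hd => by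
    obtain ⟨hdn, hlt⟩ := mem_filter.1 hd
    obtain ⟨i, hi⟩ := hval d (mem_range.1 hdn).le
    obtain ⟨j, hj⟩ := hval (d + 1) (mem_range.1 hdn)
    obtain ⟨t, ht, r, hr⟩ := hconn.exists_straddles hA hlt (hgap d) ⟨i, hi.le⟩ ⟨j, hj.ge⟩
    exact ⟨(t, r), mem_product.2 ⟨mem_range.2 ht, mem_univ r⟩, hr⟩
  have : Nonempty V := (hval 0 n.zero_le).nonempty
  choose! τ hτ hτD using hstraddle
  have hD : ∑ d ∈ range n, (y (d + 1) - y d) ^ 2 = ∑ d ∈ D, (y (d + 1) - y d) ^ 2 :=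
    (sum_filter_of_ne fun d _ hd => (hy d.le_succ).lt_of_ne fun h => hd (by simp [h])).symm
  rw [← sum_dissipation_eq fun k => (hA k).mem_doublyStochastic, ← sum_product', hD,
    ← sum_fiberwise_of_maps_to hτ, mul_sum]
  refine sum_le_sum fun tr _ => half_mul_sum_sq_gap_le_sum_mul_sq_sub
    (fun j => (hA _).mem_doublyStochastic.1 _ j) hη hy (fun d hd => ?_) _
  obtain ⟨hdD, rfl⟩ := mem_filter.1 hd
  exact hτD d hdD

theorem WindowConnected.sum_sq_transition_mulVec_le (hη : 0 ≤ η)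
    (hA : ∀ k, IsWeightMatrix η (A k)) {s : ℕ} (hconn : WindowConnected A Q s) {x : V → ℝ}
    (hx : ∑ i, x i = 0) :
    ∑ i, (transition A s Q *ᵥ x) i ^ 2 ≤
      (1 - η / (2 * (Fintype.card V : ℝ) ^ 2)) * ∑ i, x i ^ 2 := by
  rcases isEmpty_or_nonempty V with hV | hV
  · simp
  obtain ⟨n, hn⟩ := Nat.exists_eq_succ_of_ne_zero (Fintype.card_ne_zero (α := V))
  obtain ⟨y, hy, hxy⟩ := exists_monotone_enumeration hn x
  have henergy : η / (2 * (Fintype.card V : ℝ) ^ 2) * ∑ i, x i ^ 2 ≤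
      ∑ i, x i ^ 2 - ∑ i, (transition A s Q *ᵥ x) i ^ 2 := by
    calc η / (2 * (Fintype.card V : ℝ) ^ 2) * ∑ i, x i ^ 2
        ≤ η / (2 * (Fintype.card V : ℝ) ^ 2) *
            ((Fintype.card V : ℝ) ^ 2 * ∑ d ∈ range n, (y (d + 1) - y d) ^ 2) := by
          gcongr
          exact sum_sq_le_card_sq_mul_sum_sq_gap hx (hn ▸ n.le_succ) hy hxy
      _ = η / 2 * ∑ d ∈ range n, (y (d + 1) - y d) ^ 2 := by field_simp
      _ ≤ _ := hconn.half_mul_sum_sq_gap_le hη hA hy hxy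
  linarith

theorem WindowConnected.sum_sq_transition_mulVec_le_windowFactor (hη : 0 ≤ η)
    (hA : ∀ k, IsWeightMatrix η (A k)) {s : ℕ} (hconn : WindowConnected A Q s) {x : V → ℝ}
    (hx : ∑ i, x i = 0) :
    ∑ i, (transition A s Q *ᵥ x) i ^ 2 ≤ windowFactor η (Fintype.card V) ^ 2 * ∑ i, x i ^ 2 := by
  refine (hconn.sum_sq_transition_mulVec_le hη hA hx).trans ?_
  gcongr
  have hsq : 0 ≤ (η / (4 * (Fintype.card V : ℝ) ^ 2)) ^ 2 := sq_nonneg _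
  have hhalf : η / (2 * (Fintype.card V : ℝ) ^ 2) = 2 * (η / (4 * (Fintype.card V : ℝ) ^ 2)) := by
    ring
  unfold windowFactor
  linarith

theorem sum_sq_transition_mulVec_le_pow (hη : 0 ≤ η) (hA : ∀ k, IsWeightMatrix η (A k))
    (hconn : ∀ s, WindowConnected A Q s) {x : V → ℝ} (hx : ∑ i, x i = 0) (s N : ℕ) :
    ∑ i, (transition A s N *ᵥ x) i ^ 2 ≤
      (windowFactor η (Fintype.card V) ^ 2) ^ (N / Q) * ∑ i, x i ^ 2 := by
  have hds := fun k => (hA k).mem_doublyStochastic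
  have hwindows : ∀ q, ∑ i, (transition A s (Q * q) *ᵥ x) i ^ 2 ≤
      (windowFactor η (Fintype.card V) ^ 2) ^ q * ∑ i, x i ^ 2 := fun q => by
    induction q with
    | zero => simp only [mul_zero, transition_zero_mulVec, pow_zero, one_mul, le_refl]
    | succ q ih =>
      have hsum : ∑ i, (transition A s (Q * q) *ᵥ x) i = 0 :=
        (sum_mulVec_of_mem_doublyStochastic (transition_mem_doublyStochastic hds s _)).trans hx
      rw [Nat.mul_succ, transition_add, ← Matrix.mulVec_mulVec, pow_succ', mul_assoc]
      exact ((hconn _).sum_sq_transition_mulVec_le_windowFactor hη hA hsum).trans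
        (mul_le_mul_of_nonneg_left ih (sq_nonneg _))
  calc ∑ i, (transition A s N *ᵥ x) i ^ 2
      = ∑ i, (transition A (s + Q * (N / Q)) (N % Q) *ᵥ
          (transition A s (Q * (N / Q)) *ᵥ x)) i ^ 2 := by
        rw [Matrix.mulVec_mulVec, ← transition_add, Nat.div_add_mod]
    _ ≤ ∑ i, (transition A s (Q * (N / Q)) *ᵥ x) i ^ 2 :=
        sum_sq_mulVec_le (transition_mem_doublyStochastic hds _ _) _
    _ ≤ _ := hwindows _

theorem abs_transition_mulVec_le (hη : 0 ≤ η) (hQ : 0 < Q) (hA : ∀ k, IsWeightMatrix η (A k))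
    (hconn : ∀ s, WindowConnected A Q s) {x : V → ℝ} (hx : ∑ i, x i = 0)
    (hx_sq : ∑ i, x i ^ 2 ≤ 1) (s N : ℕ) (j : V) :
    |(transition A s N *ᵥ x) j| ≤
      mixingConst η (Fintype.card V) * mixingRate η (Fintype.card V) Q ^ N := by
  have : Nonempty V := ⟨j⟩
  have hη1 : η ≤ 1 := (hA 0).le_one
  have hfactor := (windowFactor_pos hη1 (Fintype.card V)).le
  refine (abs_le_of_sq_le_sq ?_ (pow_nonneg hfactor _)).trans
    (windowFactor_pow_div_le hη hη1 _ hQ N)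
  calc (transition A s N *ᵥ x) j ^ 2 ≤ ∑ i, (transition A s N *ᵥ x) i ^ 2 :=
        single_le_sum (f := fun i => (transition A s N *ᵥ x) i ^ 2)
          (fun i _ => sq_nonneg _) (mem_univ j)
    _ ≤ (windowFactor η (Fintype.card V) ^ 2) ^ (N / Q) * ∑ i, x i ^ 2 :=
        sum_sq_transition_mulVec_le_pow hη hA hconn hx s N
    _ ≤ (windowFactor η (Fintype.card V) ^ 2) ^ (N / Q) * 1 :=
        mul_le_mul_of_nonneg_left hx_sq (by positivity)
    _ = (windowFactor η (Fintype.card V) ^ (N / Q)) ^ 2 := by rw [mul_one, pow_right_comm]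

theorem abs_transition_sub_inv_card_le (hη : 0 ≤ η) (hQ : 0 < Q)
    (hA : ∀ k, IsWeightMatrix η (A k)) (hconn : ∀ s, WindowConnected A Q s) (s N : ℕ) (j i : V) :
    |transition A s N j i - (Fintype.card V : ℝ)⁻¹| ≤
      mixingConst η (Fintype.card V) * mixingRate η (Fintype.card V) Q ^ N := by
  rw [← mulVec_single_sub_const (doublyStochastic_eq_rowStochastic_inf_colStochastic.le
    (transition_mem_doublyStochastic (fun k => (hA k).mem_doublyStochastic) s N)).1]
  exact abs_transition_mulVec_le hη hQ hA hconn (sum_single_sub_inv_card i)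
    (sum_sq_single_sub_inv_card_le_one i) s N j

end Mixing

section PerturbedConsensus

variable {V E : Type*} [Fintype V]

theorem norm_sum_smul_le_mul_sum_norm [NormedAddCommGroup E] [NormedSpace ℝ E]
    {c : V → ℝ} {K : ℝ} (hc : ∀ i, |c i| ≤ K) (q : V → E) :
    ‖∑ i, c i • q i‖ ≤ K * ∑ i, ‖q i‖ := by
  rw [mul_sum]
  refine norm_sum_le_of_le _ fun i _ => ?_
  rw [norm_smul, Real.norm_eq_abs]
  exact mul_le_mul_of_nonneg_right (hc i) (norm_nonneg _)

variable [DecidableEq V] {A : ℕ → Matrix V V ℝ}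

section Module

variable [AddCommGroup E] [Module ℝ E] {w p : V → ℕ → E}

theorem sum_transition_zero_smul (s : ℕ) (j : V) (q : V → E) :
    ∑ i, transition A s 0 j i • q i = q j := by
  simp [transition, Matrix.one_apply]

theorem sum_transition_succ_smul (s t : ℕ) (j : V) (q : V → E) :
    ∑ i, transition A s (t + 1) j i • q i =
      ∑ l, A (s + t + 1) j l • ∑ i, transition A s t l i • q i := by
  simp only [transition, Matrix.mul_apply, sum_smul, smul_sum, mul_smul]
  exact sum_comm

theorem eq_sum_transition_smul
    (hw : ∀ i k, w i (k + 1) = ∑ j, A (k + 1) i j • w j k + p i (k + 1)) (j : V) (k : ℕ) :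
    w j k = ∑ i, transition A 0 k j i • w i 0 +
      ∑ ℓ ∈ Icc 1 k, ∑ i, transition A ℓ (k - ℓ) j i • p i ℓ := by
  induction k generalizing j with
  | zero => simp [sum_transition_zero_smul]
  | succ k ih =>
    have hterm : ∀ ℓ ∈ Icc 1 k, ∑ i, transition A ℓ (k + 1 - ℓ) j i • p i ℓ =
        ∑ l, A (k + 1) j l • ∑ i, transition A ℓ (k - ℓ) l i • p i ℓ := fun ℓ hℓ => by
      have hle : ℓ ≤ k := (mem_Icc.1 hℓ).2
      rw [Nat.succ_sub hle, sum_transition_succ_smul, Nat.add_sub_cancel' hle]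
    calc w j (k + 1)
        = ∑ l, A (k + 1) j l • (∑ i, transition A 0 k l i • w i 0 +
            ∑ ℓ ∈ Icc 1 k, ∑ i, transition A ℓ (k - ℓ) l i • p i ℓ) + p j (k + 1) := by
          rw [hw]
          simp only [← ih]
      _ = ∑ i, transition A 0 (k + 1) j i • w i 0 +
            (∑ ℓ ∈ Icc 1 k, ∑ i, transition A ℓ (k + 1 - ℓ) j i • p i ℓ + p j (k + 1)) := by
          rw [sum_congr rfl hterm, sum_comm, sum_transition_succ_smul, zero_add]
          simp only [smul_add, sum_add_distrib, smul_sum (s := Icc 1 k), add_assoc]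
      _ = _ := by
          rw [sum_Icc_succ_top k.succ_pos, Nat.sub_self, sum_transition_zero_smul]

theorem sum_eq_sum_add_sum_perturbation (hA : ∀ k, A k ∈ doublyStochastic ℝ V)
    (hw : ∀ i k, w i (k + 1) = ∑ j, A (k + 1) i j • w j k + p i (k + 1)) (k : ℕ) :
    ∑ i, w i k = ∑ i, w i 0 + ∑ ℓ ∈ Icc 1 k, ∑ i, p i ℓ := by
  induction k with
  | zero => simp
  | succ k ih =>
    have hmix : ∑ i, ∑ j, A (k + 1) i j • w j k = ∑ j, w j k := by
      rw [sum_comm]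
      simp only [← sum_smul, sum_col_of_mem_doublyStochastic (hA _), one_smul]
    rw [sum_Icc_succ_top k.succ_pos, ← add_assoc, ← ih]
    simp only [hw, sum_add_distrib, hmix]

theorem sub_average_eq (hA : ∀ k, A k ∈ doublyStochastic ℝ V)
    (hw : ∀ i k, w i (k + 1) = ∑ j, A (k + 1) i j • w j k + p i (k + 1)) (c : ℝ) (j : V) (k : ℕ) :
    w j k - c • ∑ i, w i k = ∑ i, (transition A 0 k j i - c) • w i 0 +
      ∑ ℓ ∈ Icc 1 k, ∑ i, (transition A ℓ (k - ℓ) j i - c) • p i ℓ := by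
  rw [sum_eq_sum_add_sum_perturbation hA hw, eq_sum_transition_smul hw]
  simp only [sub_smul, sum_sub_distrib, smul_add, smul_sum]
  abel

end Module

theorem norm_average_sub_le [NormedAddCommGroup E] [NormedSpace ℝ E] {η : ℝ} {Q : ℕ}
    (hη : 0 ≤ η) (hQ : 0 < Q) (hA : ∀ k, IsWeightMatrix η (A k))
    (hconn : ∀ s, WindowConnected A Q s) {w p : V → ℕ → E}
    (hw : ∀ i k, w i (k + 1) = ∑ j, A (k + 1) i j • w j k + p i (k + 1)) (j : V) (k : ℕ) :
    ‖(Fintype.card V : ℝ)⁻¹ • ∑ i, w i (k + 1) - w j (k + 1)‖ ≤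
      mixingConst η (Fintype.card V) * mixingRate η (Fintype.card V) Q ^ (k + 1) * ∑ i, ‖w i 0‖ +
        ∑ ℓ ∈ Icc 1 k, mixingConst η (Fintype.card V) *
          mixingRate η (Fintype.card V) Q ^ (k + 1 - ℓ) * ∑ i, ‖p i ℓ‖ +
        (Fintype.card V : ℝ)⁻¹ * ∑ i, ‖p i (k + 1)‖ + ‖p j (k + 1)‖ := by
  have hmix := abs_transition_sub_inv_card_le hη hQ hA hconn
  have hlast : ∑ i, (transition A (k + 1) 0 j i - (Fintype.card V : ℝ)⁻¹) • p i (k + 1) =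
      p j (k + 1) - (Fintype.card V : ℝ)⁻¹ • ∑ i, p i (k + 1) := by
    simp only [sub_smul, sum_sub_distrib, smul_sum, sum_transition_zero_smul]
  have haverage : ‖(Fintype.card V : ℝ)⁻¹ • ∑ i, p i (k + 1)‖ ≤
      (Fintype.card V : ℝ)⁻¹ * ∑ i, ‖p i (k + 1)‖ := by
    rw [norm_smul, Real.norm_of_nonneg (by positivity)]
    gcongr
    exact norm_sum_le _ _
  rw [norm_sub_rev, sub_average_eq (fun k => (hA k).mem_doublyStochastic) hw,
    sum_Icc_succ_top k.succ_pos, Nat.sub_self, hlast, ← add_assoc, add_assoc _ _ ‖p j (k + 1)‖]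
  refine norm_add_le_of_le (norm_add_le_of_le ?_ ?_) ?_
  · exact norm_sum_smul_le_mul_sum_norm (hmix 0 (k + 1) j) _
  · exact norm_sum_le_of_le _ fun ℓ _ => norm_sum_smul_le_mul_sum_norm (hmix ℓ (k + 1 - ℓ) j) _
  · exact (norm_sub_le_of_le le_rfl haverage).trans_eq (add_comm _ _)

end PerturbedConsensus

section ProjectedStep

variable {E : Type*} [NormedAddCommGroup E] [InnerProductSpace ℝ E] {X : Set E}

theorem norm_sub_le_of_nearest (hX : Convex ℝ X) {u v : E} (hv : v ∈ X)
    (hmin : ∀ x ∈ X, ‖u - v‖ ≤ ‖u - x‖) {x : E} (hx : x ∈ X) : ‖v - x‖ ≤ ‖u - x‖ := by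
  have : Nonempty X := ⟨⟨v, hv⟩⟩
  have hinf : ‖u - v‖ = ⨅ x : X, ‖u - x‖ :=
    le_antisymm (le_ciInf fun x => hmin x x.2)
      (ciInf_le ⟨0, Set.forall_mem_range.2 fun x : X => norm_nonneg (u - x)⟩ ⟨v, hv⟩)
  have hobtuse := (norm_eq_iInf_iff_real_inner_le_zero hX hv).1 hinf x hx
  have hexpand : ‖u - x‖ ^ 2 = ‖u - v‖ ^ 2 - 2 * inner ℝ (u - v) (x - v) + ‖v - x‖ ^ 2 := by
    rw [← sub_sub_sub_cancel_right u x v, norm_sub_sq_real, norm_sub_rev x v]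
  refine le_of_sq_le_sq ?_ (norm_nonneg _)
  linarith [sq_nonneg ‖u - v‖]

theorem norm_projected_step_sub_le (hX : Convex ℝ X) {P : E → E} (hPmem : ∀ z, P z ∈ X)
    (hPdist : ∀ z, ∀ x ∈ X, ‖z - P z‖ ≤ ‖z - x‖) {v : E} (hv : v ∈ X) {α : ℝ} (hα : 0 ≤ α)
    {g : E} {C : ℝ} (hg : ‖g‖ ≤ C) (e : E) : ‖P (v - α • (g + e)) - v‖ ≤ α * (C + ‖e‖) := by
  calc ‖P (v - α • (g + e)) - v‖ ≤ ‖v - α • (g + e) - v‖ :=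
        norm_sub_le_of_nearest hX (hPmem _) (hPdist _) hv
    _ = α * ‖g + e‖ := by rw [sub_sub_cancel_left, norm_neg, norm_smul, Real.norm_of_nonneg hα]
    _ ≤ α * (C + ‖e‖) := mul_le_mul_of_nonneg_left (norm_add_le_of_le hg le_rfl) hα

end ProjectedStep

theorem disagreement_estimate_general {V E : Type*} [Fintype V] [DecidableEq V] [Nonempty V]
    [NormedAddCommGroup E] [InnerProductSpace ℝ E] {Q : ℕ} (hQ : 0 < Q)
    {X : Set E} (hX : Convex ℝ X) {P : E → E} (hPmem : ∀ z, P z ∈ X)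
    (hPdist : ∀ z, ∀ x ∈ X, ‖z - P z‖ ≤ ‖z - x‖)
    {g : V → E → E} {C : V → ℝ} (hC : ∀ i, ∀ x ∈ X, ‖g i x‖ ≤ C i)
    {η : ℝ} (hη : 0 ≤ η) {A : ℕ → Matrix V V ℝ} (hA : ∀ k, IsWeightMatrix η (A k))
    (hconn : ∀ s, WindowConnected A Q s) {α : ℕ → ℝ} (hα : ∀ k, 0 ≤ α k) {ε w v : V → ℕ → E}
    (hw0 : ∀ i, w i 0 ∈ X) (hv : ∀ i k, v i k = ∑ j, A (k + 1) i j • w j k)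
    (hw : ∀ i k, w i (k + 1) = P (v i k - α (k + 1) • (g i (v i k) + ε i (k + 1))))
    (j : V) (k : ℕ) :
    ‖(Fintype.card V : ℝ)⁻¹ • ∑ i, w i (k + 1) - w j (k + 1)‖ ≤
      Fintype.card V * mixingConst η (Fintype.card V) *
          mixingRate η (Fintype.card V) Q ^ (k + 1) * univ.sup' univ_nonempty (fun i => ‖w i 0‖)
        + mixingConst η (Fintype.card V) *
          ∑ ℓ ∈ Icc 1 k, α ℓ * mixingRate η (Fintype.card V) Q ^ (k + 1 - ℓ) *
            ∑ i, (C i + ‖ε i ℓ‖)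
        + α (k + 1) / Fintype.card V * ∑ i, (C i + ‖ε i (k + 1)‖)
        + α (k + 1) * (C j + ‖ε j (k + 1)‖) := by
  have hwX : ∀ i k, w i k ∈ X
    | i, 0 => hw0 i
    | i, k + 1 => hw i k ▸ hPmem _
  have hvX : ∀ i k, v i k ∈ X := fun i k => hv i k ▸ hX.sum_mem
    (fun l _ => (hA _).mem_doublyStochastic.1 i l)
    (sum_row_of_mem_doublyStochastic (hA _).mem_doublyStochastic i) fun l _ => hwX l k
  let p : V → ℕ → E := fun i ℓ => w i ℓ - v i (ℓ - 1)
  have hwp : ∀ i k, w i (k + 1) = ∑ j, A (k + 1) i j • w j k + p i (k + 1) := fun i k => by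
    rw [← hv]
    exact (add_sub_cancel _ _).symm
  have hp : ∀ i, ∀ ℓ > 0, ‖p i ℓ‖ ≤ α ℓ * (C i + ‖ε i ℓ‖)
    | i, ℓ + 1, _ => (congrArg (‖· - v i ℓ‖) (hw i ℓ)).trans_le <|
        norm_projected_step_sub_le hX hPmem hPdist (hvX i ℓ) (hα _) (hC i _ (hvX i ℓ)) _
  have hpsum : ∀ ℓ > 0, ∑ i, ‖p i ℓ‖ ≤ α ℓ * ∑ i, (C i + ‖ε i ℓ‖) := fun ℓ hℓ =>
    (sum_le_sum fun i _ => hp i ℓ hℓ).trans_eq (mul_sum _ _ _).symm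
  have hw0sum : ∑ i, ‖w i 0‖ ≤
      Fintype.card V * univ.sup' univ_nonempty (fun i => ‖w i 0‖) := by
    rw [← nsmul_eq_mul, ← card_univ]
    exact sum_le_card_nsmul _ _ _ fun i hi => le_sup' (fun i => ‖w i 0‖) hi
  have hθ := mixingConst_nonneg η (Fintype.card V)
  have hβ := mixingRate_nonneg (hA 0).le_one (Fintype.card V) Q
  refine (norm_average_sub_le hη hQ hA hconn hwp j k).trans ?_
  refine add_le_add (add_le_add (add_le_add ?_ ?_) ?_) (hp j _ k.succ_pos)
  · refine (mul_le_mul_of_nonneg_left hw0sum (by positivity)).trans_eq ?_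
    ring
  · rw [mul_sum]
    refine sum_le_sum fun ℓ hℓ => ?_
    refine (mul_le_mul_of_nonneg_left (hpsum ℓ (mem_Icc.1 hℓ).1) (by positivity)).trans_eq ?_
    ring
  · refine (mul_le_mul_of_nonneg_left (hpsum _ k.succ_pos) (by positivity)).trans_eq ?_
    ring

/-- Lemma 4.1 (disagreement estimate): under closed convexity of `X`, the connectivity and
doubly stochastic weight assumptions, and uniform boundedness `‖∇f_i(x)‖ ≤ C_i` on `X` of the
subgradients, the iterates of the distributed stochastic subgradient algorithm satisfy, for all
agents `j` and all `k ≥ 0`,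
`‖y_{k+1} − w_{j,k+1}‖ ≤ mθβ^{k+1} max_i ‖w_{i,0}‖
  + θ ∑_{ℓ=1}^k α_ℓ β^{k+1−ℓ} ∑_i (C_i + ‖ε_{i,ℓ}‖)
  + (α_{k+1}/m) ∑_i (C_i + ‖ε_{i,k+1}‖) + α_{k+1}(C_j + ‖ε_{j,k+1}‖)`,
where `θ = (1 − η/(4m²))⁻²` and `β = (1 − η/(4m²))^{1/Q}`. -/
theorem disagreement_estimate {n m Q : ℕ} (hm : 0 < m) (hQ : 1 ≤ Q)
    (X : Set (EuclideanSpace ℝ (Fin n))) (hXne : X.Nonempty)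
    (hXcl : IsClosed X) (hXcv : Convex ℝ X)
    -- Euclidean projection onto X
    (P : EuclideanSpace ℝ (Fin n) → EuclideanSpace ℝ (Fin n))
    (hPmem : ∀ z, P z ∈ X)
    (hPdist : ∀ z, ∀ x ∈ X, ‖z - P z‖ ≤ ‖z - x‖)
    -- subgradients, uniformly bounded over X
    (g : Fin m → EuclideanSpace ℝ (Fin n) → EuclideanSpace ℝ (Fin n))
    (C : Fin m → ℝ) (hC : ∀ i, ∀ x ∈ X, ‖g i x‖ ≤ C i)
    -- weights: doubly stochastic, uniformly positive entries
    (a : ℕ → Fin m → Fin m → ℝ)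
    (hann : ∀ k i j, 0 ≤ a k i j)
    (harow : ∀ k i, ∑ j, a k i j = 1)
    (hacol : ∀ k j, ∑ i, a k i j = 1)
    (η : ℝ) (hη0 : 0 < η) (hη1 : η < 1)
    (haη : ∀ k i j, 0 < a k i j → η ≤ a k i j)
    (haself : ∀ k i, η ≤ a k i i)
    -- Q-step strong connectivity
    (hconn : ∀ k : ℕ, ∀ i j : Fin m,
      Relation.ReflTransGen (fun u u' => ∃ l, 1 ≤ l ∧ l ≤ Q ∧ 0 < a (k + l) u' u) i j)
    -- stepsizes and errors
    (α : ℕ → ℝ) (hα : ∀ k, 0 < α k)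
    (ε : Fin m → ℕ → EuclideanSpace ℝ (Fin n))
    -- the algorithm
    (w v : Fin m → ℕ → EuclideanSpace ℝ (Fin n))
    (hw0 : ∀ i, w i 0 ∈ X)
    (hv : ∀ i k, v i k = ∑ j, a (k + 1) i j • w j k)
    (hw : ∀ i k, w i (k + 1) = P (v i k - α (k + 1) • (g i (v i k) + ε i (k + 1))))
    (y : ℕ → EuclideanSpace ℝ (Fin n))
    (hy : ∀ k, y k = (m : ℝ)⁻¹ • ∑ i, w i k) :
    ∀ (j : Fin m) (k : ℕ),
      ‖y (k + 1) - w j (k + 1)‖ ≤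
        m * ((1 - η / (4 * (m : ℝ) ^ 2)) ^ 2)⁻¹ *
            ((1 - η / (4 * (m : ℝ) ^ 2)) ^ ((1 : ℝ) / (Q : ℝ))) ^ (k + 1) *
            (Finset.univ.sup' (Finset.univ_nonempty_iff.mpr (Fin.pos_iff_nonempty.mp hm))
              fun i => ‖w i 0‖)
          + ((1 - η / (4 * (m : ℝ) ^ 2)) ^ 2)⁻¹ *
            ∑ ℓ ∈ Finset.Icc 1 k, α ℓ *
              ((1 - η / (4 * (m : ℝ) ^ 2)) ^ ((1 : ℝ) / (Q : ℝ))) ^ (k + 1 - ℓ) *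
              ∑ i, (C i + ‖ε i ℓ‖)
          + (α (k + 1) / m) * ∑ i, (C i + ‖ε i (k + 1)‖)
          + α (k + 1) * (C j + ‖ε j (k + 1)‖) := by
  have : Nonempty (Fin m) := Fin.pos_iff_nonempty.mp hm
  have hA : ∀ k, IsWeightMatrix η (a k) := fun k =>
    ⟨mem_doublyStochastic_iff_sum.2 ⟨hann k, harow k, hacol k⟩, haη k, haself k⟩
  intro j k
  simpa only [hy, mixingConst, mixingRate, windowFactor, Fintype.card_fin] using
    disagreement_estimate_general hQ hXcv hPmem hPdist hC hη0.le hA hconn (fun k => (hα k).le)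
      hw0 hv hw j k
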